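/- arXiv:1105.1395 — 2 statements merged into one kernel-verified Lean document; each statement's English description precedes it below -/
import Mathlib

section
/- Let L be a finite lattice, let φ be a capacity on L, and let Φ ∈ M_∞(𝓛) be a completely monotone extension of φ (Π(Φ) = φ). Then φ is completely alternating and Φ is the dual Möbius extension of φ (i.e., the Möbius inverse of Φ on 𝓛 is supported on {U ∈ 𝓛 : L∖U is a principal order ideal of L}) if and only if Φ(⟨a,b⟩*) = φ(a) + φ(b) − φ(a ∨ b) for every pair a, b ∈ L. -/
/-!
Write `φ` and `Φ` through the Möbius inverse: `φ x = ∑_{V ∋ x} f V` and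
`Φ(⟨a,b⟩*) = ∑_{V ∋ a, b} f V`. Inclusion–exclusion gives

  `Φ(⟨a,b⟩*) = φ a + φ b - φ (a ⊔ b) + ∑ f V`, the sum over `V` with `a ⊔ b ∈ V`, `a, b ∉ V`

(`pair_formula`). If every `V` in the support of `f` is the complement of a principal ideal, the
error sum is empty. Conversely `f ≥ 0`, because `f U` is itself a successive difference of `Φ` at
`U` (`mobius_nonneg`); so if all error sums vanish, the complement of every `V` in the support is
closed under joins. It is nonempty since `f(univ) = φ ⊥ = 0`, hence it is the principal ideal
generated by its join. For such `V` the function `x ↦ [x ∉ V]` turns joins into products, so the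
differences of `φ` have an explicit sign (`dualSuccDiff_nonpos`).
-/

attribute [local instance 50] Classical.propDecidable

/-- `U` is a member of `𝓛`: a nonempty dual order ideal (up-set) of `L`. -/
def MemL {L : Type*} [Lattice L] (U : Finset L) : Prop :=
  (∀ ⦃x y : L⦄, x ∈ U → x ≤ y → y ∈ U) ∧ U.Nonempty

/-- The family `𝓛` of nonempty up-sets of `L`, as a finset of finsets. -/
noncomputable def LFam (L : Type*) [Lattice L] [Fintype L] : Finset (Finset L) :=
  Finset.univ.filter (fun U => MemL U)

/-- The successive difference operator on `𝓛` (ordered by reverse inclusion, so that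
the meet of two up-sets is their union): `∇_U Φ(W) = Φ(W) − Φ(W ⊓ U) = Φ(W) − Φ(W ∪ U)`,
iterated over a list. -/
def succDiffU {L : Type*} [Lattice L] [DecidableEq L]
    (Φ : Finset L → ℝ) (l : List (Finset L)) : Finset L → ℝ :=
  l.foldl (fun Ψ U => fun W => Ψ W - Ψ (W ∪ U)) Φ

/-- `Φ ∈ M_∞(𝓛)`: `Φ` is nonnegative and completely monotone on `𝓛`
(the empty list gives nonnegativity of `Φ` itself). -/
def Minf {L : Type*} [Lattice L] [DecidableEq L] (Φ : Finset L → ℝ) : Prop :=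
  ∀ l : List (Finset L), (∀ U ∈ l, MemL U) → ∀ W : Finset L, MemL W →
    0 ≤ succDiffU Φ l W

/-- The principal up-set `⟨x⟩* = {y ∈ L : y ≥ x}`. -/
noncomputable def pUp {L : Type*} [Lattice L] [Fintype L] (x : L) : Finset L :=
  Finset.univ.filter (fun y => x ≤ y)

/-- The up-set `⟨A⟩*` generated by `A ⊆ L`. -/
noncomputable def upGen {L : Type*} [Lattice L] [Fintype L] (A : Finset L) : Finset L :=
  Finset.univ.filter (fun y => ∃ a ∈ A, a ≤ y)

/-- `φ ∈ M_1(L)`: `φ` is nonnegative and monotone. -/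
def M1 {L : Type*} [Lattice L] (φ : L → ℝ) : Prop :=
  (∀ x, 0 ≤ φ x) ∧ Monotone φ

/-- `f` is the Möbius inverse of `Φ` on `𝓛`: `Φ(U) = Σ_{V ⪯ U} f(V)`,
where `V ⪯ U` means `U ⊆ V`. -/
def IsMobiusInvL {L : Type*} [Lattice L] [Fintype L] (Φ f : Finset L → ℝ) : Prop :=
  ∀ U : Finset L, MemL U → Φ U = ∑ V ∈ (LFam L).filter (fun V => U ⊆ V), f V

/-- `φ` is a capacity on `L`: monotone with `φ(0̂) = 0` and `φ(1̂) = 1`. -/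
def Capacity {L : Type*} [Lattice L] [BoundedOrder L] (φ : L → ℝ) : Prop :=
  Monotone φ ∧ φ ⊥ = 0 ∧ φ ⊤ = 1

/-- The dual successive difference operator `Δ_{b_1,…,b_n} φ`, with
`Δ_b φ(x) = φ(x) − φ(x ∨ b)` and `Δ_{b_1,…,b_n} φ = Δ_{b_n}(Δ_{b_1,…,b_{n−1}} φ)`. -/
def dualSuccDiff {L : Type*} [Lattice L] (φ : L → ℝ) (l : List L) : L → ℝ :=
  l.foldl (fun ψ b => fun x => ψ x - ψ (x ⊔ b)) φ

/-- Successive differences of `Φ = ∑ c V [· ⊆ V]` are computed termwise: as `[W ∪ U ⊆ V]` is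
`[W ⊆ V] [U ⊆ V]`, each difference only contributes a factor `1 - [U ⊆ V]`. -/
theorem succDiffU_eq {L : Type*} [Lattice L] [Fintype L] [DecidableEq L]
    (l : List (Finset L)) (hl : ∀ U ∈ l, MemL U) :
    ∀ (Φ c : Finset L → ℝ),
      (∀ W, MemL W → Φ W = ∑ V ∈ LFam L, c V * (if W ⊆ V then 1 else 0)) →
      ∀ W, MemL W → succDiffU Φ l W =
        ∑ V ∈ LFam L, (c V * (l.map (fun U => if U ⊆ V then (0 : ℝ) else 1)).prod) *
          (if W ⊆ V then 1 else 0) := by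
  induction l with
  | nil => intro Φ c h W hW; simpa [succDiffU] using h W hW
  | cons U l ih =>
    intro Φ c h W hW
    have hU : MemL U := hl U (by simp)
    have key := ih (fun U' h' => hl U' (by simp [h'])) (fun W => Φ W - Φ (W ∪ U))
      (fun V => c V * (if U ⊆ V then 0 else 1)) (by
        intro W hW
        have hWU : MemL (W ∪ U) := by
          refine ⟨?_, hW.2.mono Finset.subset_union_left⟩
          intro x y hx hxy
          rcases Finset.mem_union.1 hx with hx | hx
          · exact Finset.mem_union_left _ (hW.1 hx hxy)
          · exact Finset.mem_union_right _ (hU.1 hx hxy)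
        simp only [h W hW, h _ hWU, ← Finset.sum_sub_distrib]
        refine Finset.sum_congr rfl fun V _ => ?_
        by_cases h1 : W ⊆ V <;> by_cases h2 : U ⊆ V <;> simp [h1, h2, Finset.union_subset_iff]) W hW
    have e : succDiffU Φ (U :: l) W = succDiffU (fun W => Φ W - Φ (W ∪ U)) l W := rfl
    rw [e, key]
    refine Finset.sum_congr rfl fun V _ => ?_
    simp only [List.map_cons, List.prod_cons]
    ring

theorem mobius_sum {L : Type*} [Lattice L] [Fintype L] [DecidableEq L]
    {Φ f : Finset L → ℝ} (hf : IsMobiusInvL Φ f) (W : Finset L) (hW : MemL W) :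
    Φ W = ∑ V ∈ LFam L, f V * (if W ⊆ V then 1 else 0) := by
  rw [hf W hW, Finset.sum_filter]
  refine Finset.sum_congr rfl fun V _ => ?_
  by_cases h : W ⊆ V <;> simp [h]

/-- The Möbius inverse of a completely monotone function is nonnegative: `f U` is the successive
difference of `Φ` at `U` over all `V ∈ 𝓛` with `V ⊈ U`. -/
theorem mobius_nonneg {L : Type*} [Lattice L] [Fintype L] [DecidableEq L]
    {Φ f : Finset L → ℝ} (hΦ : Minf Φ) (hf : IsMobiusInvL Φ f) (U : Finset L) (hU : MemL U) :
    0 ≤ f U := by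
  set l := ((LFam L).filter (fun V => ¬ V ⊆ U)).toList with hl
  have hmem : ∀ V, V ∈ l ↔ MemL V ∧ ¬ V ⊆ U := by
    intro V; simp [hl, LFam]
  have h0 := hΦ l (fun V hV => ((hmem V).1 hV).1) U hU
  rw [succDiffU_eq l (fun V hV => ((hmem V).1 hV).1) Φ f (mobius_sum hf) U hU,
    Finset.sum_eq_single U] at h0
  · have h1 : (l.map (fun V => if V ⊆ U then (0 : ℝ) else 1)).prod = 1 := by
      apply List.prod_eq_one
      intro r hr
      obtain ⟨V, hV, rfl⟩ := List.mem_map.1 hr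
      simp [((hmem V).1 hV).2]
    simpa [h1] using h0
  · intro V hV hne
    by_cases hUV : U ⊆ V
    · -- `V` strictly contains `U`, so `V` itself occurs in `l` and contributes the factor `0`.
      have hVl : V ∈ l := (hmem V).2
        ⟨by simpa [LFam] using hV, fun h => hne (Finset.Subset.antisymm h hUV)⟩
      have : (l.map (fun U => if U ⊆ V then (0 : ℝ) else 1)).prod = 0 :=
        List.prod_eq_zero (List.mem_map.2 ⟨V, hVl, by simp⟩)
      simp [this]
    · simp [hUV]
  · intro h; exact absurd (by simpa [LFam] using hU) h

theorem pUp_subset_iff {L : Type*} [Lattice L] [Fintype L] {V : Finset L} (hV : MemL V) (x : L) :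
    pUp x ⊆ V ↔ x ∈ V := by
  constructor
  · intro h; exact h (by simp [pUp])
  · intro h y hy; exact hV.1 h (by simpa [pUp] using hy)

theorem memL_pUp {L : Type*} [Lattice L] [Fintype L] (x : L) : MemL (pUp x) :=
  ⟨fun a b ha hab => by simp only [pUp, Finset.mem_filter, Finset.mem_univ, true_and] at *
                        exact ha.trans hab, ⟨x, by simp [pUp]⟩⟩

theorem memL_pUp_union {L : Type*} [Lattice L] [Fintype L] [DecidableEq L] (a b : L) :
    MemL (pUp a ∪ pUp b) := by
  refine ⟨?_, (memL_pUp a).2.mono Finset.subset_union_left⟩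
  intro x y hx hxy
  rcases Finset.mem_union.1 hx with hx | hx
  · exact Finset.mem_union_left _ ((memL_pUp a).1 hx hxy)
  · exact Finset.mem_union_right _ ((memL_pUp b).1 hx hxy)

theorem marg_sum {L : Type*} [Lattice L] [Fintype L] [DecidableEq L]
    {φ : L → ℝ} {Φ f : Finset L → ℝ} (hmarg : ∀ x : L, Φ (pUp x) = φ x)
    (hf : IsMobiusInvL Φ f) (x : L) :
    φ x = ∑ V ∈ LFam L, f V * (if x ∈ V then 1 else 0) := by
  rw [← hmarg x, mobius_sum hf _ (memL_pUp x)]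
  refine Finset.sum_congr rfl fun V hV => ?_
  simp [pUp_subset_iff (show MemL V by simpa [LFam] using hV)]

/-- Inclusion–exclusion for `Φ(⟨a,b⟩*)`: the error term collects the `V` whose complement contains
`a` and `b` but not `a ⊔ b`. -/
theorem pair_formula {L : Type*} [Lattice L] [Fintype L] [DecidableEq L]
    {φ : L → ℝ} {Φ f : Finset L → ℝ} (hmarg : ∀ x : L, Φ (pUp x) = φ x)
    (hf : IsMobiusInvL Φ f) (a b : L) :
    Φ (pUp a ∪ pUp b) = φ a + φ b - φ (a ⊔ b) +
      ∑ V ∈ LFam L, f V * (if a ⊔ b ∈ V ∧ a ∉ V ∧ b ∉ V then 1 else 0) := by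
  rw [mobius_sum hf _ (memL_pUp_union a b), marg_sum hmarg hf a, marg_sum hmarg hf b,
    marg_sum hmarg hf (a ⊔ b), ← Finset.sum_add_distrib, ← Finset.sum_sub_distrib,
    ← Finset.sum_add_distrib]
  refine Finset.sum_congr rfl fun V hV => ?_
  have hV : MemL V := by simpa [LFam] using hV
  have ha : a ∈ V → a ⊔ b ∈ V := fun h => hV.1 h le_sup_left
  have hb : b ∈ V → a ⊔ b ∈ V := fun h => hV.1 h le_sup_right
  simp only [Finset.union_subset_iff, pUp_subset_iff hV]
  by_cases h1 : a ∈ V <;> by_cases h2 : b ∈ V <;> by_cases h3 : a ⊔ b ∈ V <;>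
    simp_all

/-- If `φ = -∑ c V [· ∉ V]` with `c ≥ 0`, and the complement of each `V` in the support is a
join-closed down-set, then all differences of `φ` are of the same form: `Δ_b` multiplies `c V`
by `[b ∈ V]`. -/
theorem dualSuccDiff_nonpos {L : Type*} [Lattice L] [DecidableEq L] (S : Finset (Finset L))
    (l : List L) :
    ∀ (φ : L → ℝ) (c : Finset L → ℝ), (∀ V ∈ S, 0 ≤ c V) →
      (∀ V ∈ S, c V ≠ 0 → ∀ x b, x ⊔ b ∈ V ↔ x ∈ V ∨ b ∈ V) →
      (∀ x, φ x = - ∑ V ∈ S, c V * (if x ∈ V then 0 else 1)) →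
      ∀ x, dualSuccDiff φ l x ≤ 0 := by
  induction l with
  | nil =>
    intro φ c h0 _ h x
    change φ x ≤ 0
    rw [h x, neg_nonpos]
    exact Finset.sum_nonneg fun V hV => mul_nonneg (h0 V hV) (by split_ifs <;> simp)
  | cons b l ih =>
    intro φ c h0 hc h x
    refine ih (fun x => φ x - φ (x ⊔ b)) (fun V => c V * (if b ∈ V then 1 else 0)) ?_ ?_ ?_ x
    · exact fun V hV => mul_nonneg (h0 V hV) (by split_ifs <;> simp)
    · exact fun V hV hne => hc V hV (left_ne_zero_of_mul hne)
    · intro x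
      simp only [h x, h (x ⊔ b), ← Finset.sum_neg_distrib, ← Finset.sum_sub_distrib]
      refine Finset.sum_congr rfl fun V hV => ?_
      by_cases hcV : c V = 0
      · simp [hcV]
      · have := hc V hV hcV x b
        by_cases h1 : x ∈ V <;> by_cases h2 : b ∈ V <;> simp [this, h1, h2]

/-- For a capacity `φ` and a completely monotone extension `Φ` with Möbius inverse `f`
on `𝓛`: `φ` is completely alternating and `Φ` is the dual Möbius extension of `φ`
(`f` is supported on `{U ∈ 𝓛 : L∖U is a principal order ideal}`) iff
`Φ(⟨a,b⟩*) = φ(a) + φ(b) − φ(a ∨ b)` for every pair `a, b ∈ L`. -/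
theorem stmt_17 {L : Type*} [Lattice L] [Fintype L] [BoundedOrder L] [DecidableEq L]
    (φ : L → ℝ) (hφ : Capacity φ) (Φ f : Finset L → ℝ)
    (hΦ : Minf Φ) (hmarg : ∀ x : L, Φ (pUp x) = φ x) (hf : IsMobiusInvL Φ f) :
    ((∀ l : List L, l ≠ [] → ∀ x : L, dualSuccDiff φ l x ≤ 0) ∧
      (∀ U : Finset L, MemL U → f U ≠ 0 →
        ∃ y : L, U = Finset.univ.filter (fun x => ¬ x ≤ y))) ↔
      ∀ a b : L, Φ (pUp a ∪ pUp b) = φ a + φ b - φ (a ⊔ b) := by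
  have hmemL : ∀ V : Finset L, V ∈ LFam L ↔ MemL V := fun V => by simp [LFam]
  constructor
  · rintro ⟨-, hsupp⟩ a b
    rw [pair_formula hmarg hf a b, Finset.sum_eq_zero, add_zero]
    intro V hV
    by_cases hfV : f V = 0
    · simp [hfV]
    · obtain ⟨y, rfl⟩ := hsupp V ((hmemL V).1 hV) hfV
      rw [if_neg, mul_zero]
      simp only [Finset.mem_filter, Finset.mem_univ, true_and, not_not, sup_le_iff]
      tauto
  · intro hpair
    have hnn : ∀ V ∈ LFam L, 0 ≤ f V := fun V hV => mobius_nonneg hΦ hf V ((hmemL V).1 hV)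
    have hjoin : ∀ V ∈ LFam L, f V ≠ 0 → ∀ a b, a ⊔ b ∈ V ↔ a ∈ V ∨ b ∈ V := by
      intro V hV hne a b
      constructor
      · intro hab
        by_contra hcon
        push Not at hcon
        have hs : ∑ V ∈ LFam L, f V * (if a ⊔ b ∈ V ∧ a ∉ V ∧ b ∉ V then 1 else 0) = 0 := by
          have := pair_formula hmarg hf a b
          rw [hpair a b] at this
          linarith
        rw [Finset.sum_eq_zero_iff_of_nonneg (fun V hV =>
          mul_nonneg (hnn V hV) (by split_ifs <;> simp))] at hs
        have := hs V hV
        rw [if_pos ⟨hab, hcon.1, hcon.2⟩, mul_one] at this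
        exact hne this
      · rintro (h | h)
        · exact ((hmemL V).1 hV).1 h le_sup_left
        · exact ((hmemL V).1 hV).1 h le_sup_right
    have hbot : ∀ V ∈ LFam L, f V ≠ 0 → ⊥ ∉ V := by
      intro V hV hne hb
      have hs := marg_sum hmarg hf ⊥
      rw [hφ.2.1, eq_comm, Finset.sum_eq_zero_iff_of_nonneg (fun V hV =>
        mul_nonneg (hnn V hV) (by split_ifs <;> simp))] at hs
      have := hs V hV
      rw [if_pos hb, mul_one] at this
      exact hne this
    refine ⟨?_, ?_⟩
    · intro l hl x
      obtain ⟨b, l, rfl⟩ := List.exists_cons_of_ne_nil hl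
      -- The first difference removes the constant in `φ = ∑ f V - ∑ f V [· ∉ V]`.
      refine dualSuccDiff_nonpos (LFam L) l (fun x => φ x - φ (x ⊔ b))
        (fun V => f V * (if b ∈ V then 1 else 0)) ?_ ?_ ?_ x
      · exact fun V hV => mul_nonneg (hnn V hV) (by split_ifs <;> simp)
      · exact fun V hV hne => hjoin V hV (left_ne_zero_of_mul hne)
      · intro x
        simp only [marg_sum hmarg hf x, marg_sum hmarg hf (x ⊔ b), ← Finset.sum_neg_distrib,
          ← Finset.sum_sub_distrib]
        refine Finset.sum_congr rfl fun V hV => ?_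
        by_cases hcV : f V = 0
        · simp [hcV]
        · have := hjoin V hV hcV x b
          by_cases h1 : x ∈ V <;> by_cases h2 : b ∈ V <;> simp [this, h1, h2]
    · intro U hU hne
      have hUL := (hmemL U).2 hU
      -- `y` is the join of the complement of `U`; it still lies in the complement.
      have hy : Uᶜ.sup id ∉ U := by
        refine Finset.sup_induction (p := fun z => z ∉ U) (hbot U hUL hne) ?_ ?_
        · intro a ha b hb
          rw [hjoin U hUL hne]
          tauto
        · intro a ha; simpa using ha
      refine ⟨Uᶜ.sup id, ?_⟩
      ext x
      simp only [Finset.mem_filter, Finset.mem_univ, true_and]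
      constructor
      · exact fun hx hxy => hy (hU.1 hx hxy)
      · intro hx
        by_contra hxU
        exact hx (Finset.le_sup (f := id) (Finset.mem_compl.2 hxU))
end

section
/- Let L be a finite lattice, let φ be a capacity on L, and let ψ be a completely monotone capacity on L. Suppose that Λ_{a_1,…,a_k} φ(1̂) ≤ ∇_{a_1,…,a_k} ψ(1̂) for every k ≥ 1 and every sequence (a_1,…,a_k) of distinct elements of L such that a_i < a_j implies i < j (every monotone path). Then there exists γ : 𝓛 × L → [0,∞) with Σ_{(V,y)} γ(V,y) = 1, Σ{γ(V,y) : (V,y) with x ∈ V} = φ(x) for all x ∈ L, Σ{γ(V,y) : (V,y) with y ≤ y₀} = ψ(y₀) for all y₀ ∈ L, and γ(V,y) = 0 whenever y ∉ V (i.e., a joint distribution of (𝒳, Y) with the given marginals and ℙ(Y ∈ 𝒳) = 1). -/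
/-!
Write `p` for the Möbius inverse of `ψ`, a probability vector because `ψ` is a completely monotone
capacity. A coupling exists iff `φ` lies in the convex hull of the finitely many functions
`x ↦ ∑_y p y · 1[x ∈ s y]`, where `s` runs over the maps choosing for each `y` an up-set `s y ∋ y`.
By separation this amounts to the inequality `∑_y p y · m y ≤ ∑_x α x · φ x` for every `α : L → ℝ`,
where `m y` is the minimum of `α(V) = ∑_{x ∈ V} α x` over the up-sets `V ∋ y` (`dual_bound`).

The function `m` is antitone, so there is a linear extension `a₁, …, aₙ` of `L` along which `m`
decreases (`exists_list`). Let `φₖ = Λ_{a₁,…,aₖ} φ`. For a nonnegative monotone function `φ`, the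
value `lam φ a x` is the supremum of the weights of arbitrary walks from `a` to `x`, because
removing detours and pruning branches of a tree never lowers the weight. Hence both `lam φ a` and
`φ - lam φ a` are nonnegative and monotone, and `lam φ a` is constant equal to `φ a` above `a`. So
each `φₖ₋₁ - φₖ` is a nonnegative combination, of total weight `φₖ₋₁(⊤) - φₖ(⊤)`, of indicators of
up-sets containing `aₖ` (`layer_bound`), and `φₙ = 0`. This gives
`∑ α φ ≥ ∑ₖ m(aₖ) (φₖ₋₁(⊤) - φₖ(⊤))`. Since `{a₁, …, aₖ}` is a down-set,
`p(aₖ) = ∇_{a₁,…,aₖ₋₁} ψ(⊤) - ∇_{a₁,…,aₖ} ψ(⊤)`, and summation by parts with the hypothesis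
`φₖ(⊤) ≤ ∇_{a₁,…,aₖ} ψ(⊤)` yields the inequality (`chain_bound`).
-/

attribute [local instance 50] Classical.propDecidable

/-- A tree in `𝒯`: a connected acyclic simple graph whose (nonempty) vertex set is a
subset of `L`, given by its vertex finset and edge finset. -/
structure FinTree (L : Type*) [Lattice L] where
  verts : Finset L
  edges : Finset (Sym2 L)
  nonempty : verts.Nonempty
  loopless : ∀ e ∈ edges, ¬ e.IsDiag
  edge_mem : ∀ e ∈ edges, ∀ x ∈ e, x ∈ verts
  connected : ∀ x ∈ verts, ∀ y ∈ verts,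
    (SimpleGraph.fromEdgeSet (edges : Set (Sym2 L))).Reachable x y
  acyclic : (SimpleGraph.fromEdgeSet (edges : Set (Sym2 L))).IsAcyclic

/-- `φ(G) = Σ_{a ∈ G} φ(a) − Σ_{{a,b} ∈ E(G)} φ(a ∨ b)` for a tree `G ∈ 𝒯`. -/
noncomputable def phiTree {L : Type*} [Lattice L] (φ : L → ℝ) (G : FinTree L) : ℝ :=
  (∑ a ∈ G.verts, φ a) -
    ∑ e ∈ G.edges, Sym2.lift ⟨fun a b => φ (a ⊔ b), fun a b => by simp [sup_comm]⟩ e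

/-- `H` is a path from `a` to `b`: a tree in `𝒯` whose only leaves are `a` and `b`
(the one-vertex tree `{a}` being a path from `a` to `a`). -/
def IsPathTree {L : Type*} [Lattice L] (H : FinTree L) (a b : L) : Prop :=
  a ∈ H.verts ∧ b ∈ H.verts ∧
    ∀ x ∈ H.verts, (H.edges.filter (fun e => x ∈ e)).card ≤ 1 → x = a ∨ x = b

/-- `λ(φ; a, b)`: the maximum of `φ(H)` over paths `H` from `a` to `b`. -/
noncomputable def lam {L : Type*} [Lattice L] (φ : L → ℝ) (a b : L) : ℝ :=
  sSup {r : ℝ | ∃ H : FinTree L, IsPathTree H a b ∧ phiTree φ H = r}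

/-- The successive λ-difference operator `Λ_{a_1,…,a_n} φ`, with
`Λ_a φ(x) = φ(x) − λ(φ; a, x)` and `Λ_{a_1,…,a_n} φ = Λ_{a_n}(Λ_{a_1,…,a_{n−1}} φ)`. -/
noncomputable def lamSucc {L : Type*} [Lattice L] (φ : L → ℝ) (l : List L) : L → ℝ :=
  l.foldl (fun ψ a => fun x => ψ x - lam ψ a x) φ

/-- The successive difference operator `∇_{a_1,…,a_n} φ` on `L`. -/
def succDiff {L : Type*} [Lattice L] (φ : L → ℝ) (l : List L) : L → ℝ :=
  l.foldl (fun ψ a => fun x => ψ x - ψ (x ⊓ a)) φ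

/-- `φ` is completely monotone: all successive differences (`n ≥ 1`) are nonnegative. -/
def CMono {L : Type*} [Lattice L] (φ : L → ℝ) : Prop :=
  ∀ l : List L, l ≠ [] → ∀ x, 0 ≤ succDiff φ l x

/-! ### Walks and their weights -/

/-- The weight of an edge: `φ (a ⊔ b)` for the edge `{a, b}`. -/
noncomputable def edgeVal {L : Type*} [Lattice L] (φ : L → ℝ) : Sym2 L → ℝ :=
  Sym2.lift ⟨fun a b => φ (a ⊔ b), fun a b => by simp [sup_comm]⟩

/-- The analogue of `phiTree` for a walk in the complete graph on `L`, where vertices and edges are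
counted with multiplicity. -/
noncomputable def wval {L : Type*} [Lattice L] (φ : L → ℝ) :
    ∀ {u v : L}, (⊤ : SimpleGraph L).Walk u v → ℝ
  | u, _, .nil => φ u
  | _, _, .cons (u := u) (v := v) _ p => φ u - φ (u ⊔ v) + wval φ p

section Walks

variable {L : Type*} [Lattice L] {φ : L → ℝ}

lemma wval_append {u v w : L} (p : (⊤ : SimpleGraph L).Walk u v)
    (q : (⊤ : SimpleGraph L).Walk v w) :
    wval φ (p.append q) = wval φ p + wval φ q - φ v := by
  induction p with
  | nil => simp [wval]
  | cons h p ih => simp only [SimpleGraph.Walk.cons_append, wval, ih]; ring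

lemma wval_le_right (hm : Monotone φ) {u v : L} (p : (⊤ : SimpleGraph L).Walk u v) :
    wval φ p ≤ φ v := by
  induction p with
  | nil => simp [wval]
  | @cons u w v h p ih =>
    have : φ u ≤ φ (u ⊔ w) := hm le_sup_left
    simp only [wval]; linarith

lemma wval_le_left (hm : Monotone φ) {u v : L} (p : (⊤ : SimpleGraph L).Walk u v) :
    wval φ p ≤ φ u := by
  induction p with
  | nil => simp [wval]
  | @cons u w v h p ih =>
    have : φ w ≤ φ (u ⊔ w) := hm le_sup_right
    simp only [wval]; linarith

/-- Short-cutting a walk to a path does not decrease its weight, since a closed detour contributes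
a nonpositive amount. -/
lemma wval_le_bypass (hm : Monotone φ) {u v : L} (p : (⊤ : SimpleGraph L).Walk u v) :
    wval φ p ≤ wval φ p.bypass := by
  induction p with
  | nil => simp [wval, SimpleGraph.Walk.bypass]
  | @cons u w v h p ih =>
    have h1 : φ u ≤ φ (u ⊔ w) := hm le_sup_left
    simp only [SimpleGraph.Walk.bypass]
    split_ifs with hs
    · have h2 := wval_append (φ := φ) (p.bypass.takeUntil u hs) (p.bypass.dropUntil u hs)
      rw [SimpleGraph.Walk.take_spec] at h2
      have h3 := wval_le_right hm (p.bypass.takeUntil u hs)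
      simp only [wval]; linarith
    · simp only [wval]; linarith

/-- For a monotone nonnegative `φ`, enlarging a nonempty part `(S, E)` of a tree to the whole tree
does not increase the alternating sum: every new vertex comes with an edge of at least its weight. -/
lemma phiTree_le_part (hm : Monotone φ) (h0 : ∀ x, 0 ≤ φ x) (H : FinTree L) (n : ℕ) :
    ∀ (S : Finset L) (E : Finset (Sym2 L)), (H.verts \ S).card = n → S ⊆ H.verts →
      S.Nonempty → E ⊆ H.edges → (∀ e ∈ E, ∀ x ∈ e, x ∈ S) →
      phiTree φ H ≤ ∑ a ∈ S, φ a - ∑ e ∈ E, edgeVal φ e := by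
  induction n with
  | zero =>
    intro S E hc hS hne hE hES
    have hSv : S = H.verts :=
      Finset.Subset.antisymm hS (Finset.sdiff_eq_empty_iff_subset.mp (Finset.card_eq_zero.mp hc))
    have : ∑ e ∈ E, edgeVal φ e ≤ ∑ e ∈ H.edges, edgeVal φ e :=
      Finset.sum_le_sum_of_subset_of_nonneg hE (fun e _ _ => by
        induction e using Sym2.ind with
        | _ a b => exact h0 _)
    subst hSv
    change _ - ∑ e ∈ H.edges, edgeVal φ e ≤ _
    linarith
  | succ n ih =>
    intro S E hc hS hne hE hES
    obtain ⟨v, hv⟩ : (H.verts \ S).Nonempty := Finset.card_pos.mp (by omega)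
    obtain ⟨s, hs⟩ := hne
    rw [Finset.mem_sdiff] at hv
    obtain ⟨p⟩ := H.connected s (hS hs) v hv.1
    obtain ⟨d, -, hd1, hd2⟩ := p.exists_boundary_dart (S : Set L) hs hv.2
    have hde : s(d.fst, d.snd) ∈ H.edges := by
      have := d.adj
      rw [SimpleGraph.fromEdgeSet_adj] at this
      exact_mod_cast this.1
    have hd2' : d.snd ∉ S := by exact_mod_cast hd2
    have hdE : s(d.fst, d.snd) ∉ E := fun h => hd2' (hES _ h _ (by simp))
    have hdv : d.snd ∈ H.verts := H.edge_mem _ hde _ (by simp)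
    have := ih (insert d.snd S) (insert s(d.fst, d.snd) E) (by
        rw [Finset.sdiff_insert, Finset.card_erase_of_mem (Finset.mem_sdiff.mpr ⟨hdv, hd2'⟩), hc]
        simp) (by
        intro x hx
        rcases Finset.mem_insert.mp hx with rfl | hx
        · exact hdv
        · exact hS hx) (Finset.insert_nonempty _ _) (by
        intro x hx
        rcases Finset.mem_insert.mp hx with rfl | hx
        · exact hde
        · exact hE hx) (by
        intro e he x hx
        rcases Finset.mem_insert.mp he with rfl | he
        · rcases Sym2.mem_iff.mp hx with rfl | rfl
          · exact Finset.mem_insert_of_mem hd1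
          · exact Finset.mem_insert_self _ _
        · exact Finset.mem_insert_of_mem (hES _ he _ hx))
    rw [Finset.sum_insert hd2', Finset.sum_insert hdE] at this
    have h2 : φ d.snd ≤ edgeVal φ s(d.fst, d.snd) := hm le_sup_right
    linarith

/-- On a path, where vertices and edges are not repeated, `wval` is the alternating sum over the
sets of vertices and edges. -/
lemma exists_wval_eq {G : SimpleGraph L} {u v : L} (p : G.Walk u v) (hp : p.IsPath) :
    ∃ w : (⊤ : SimpleGraph L).Walk u v,
      wval φ w = ∑ a ∈ p.support.toFinset, φ a - ∑ e ∈ p.edges.toFinset, edgeVal φ e := by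
  induction p with
  | nil => exact ⟨.nil, by simp [wval]⟩
  | @cons u x v h p ih =>
    rw [SimpleGraph.Walk.cons_isPath_iff] at hp
    obtain ⟨w, hw⟩ := ih hp.1
    refine ⟨.cons (by simpa using h.ne) w, ?_⟩
    have he : s(u, x) ∉ p.edges.toFinset := fun hc =>
      hp.2 (p.fst_mem_support_of_mem_edges (List.mem_toFinset.mp hc))
    rw [SimpleGraph.Walk.support_cons, SimpleGraph.Walk.edges_cons, List.toFinset_cons,
      List.toFinset_cons, Finset.sum_insert (by simpa using hp.2), Finset.sum_insert he, wval, hw]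
    change _ = _ - (φ (u ⊔ x) + _)
    ring

/-- The value of a tree containing `a` and `b` is at most that of its path from `a` to `b`. -/
lemma exists_walk_ge (hm : Monotone φ) (h0 : ∀ x, 0 ≤ φ x) (H : FinTree L) {a b : L}
    (ha : a ∈ H.verts) (hb : b ∈ H.verts) :
    ∃ w : (⊤ : SimpleGraph L).Walk a b, phiTree φ H ≤ wval φ w := by
  obtain ⟨q⟩ := H.connected a ha b hb
  obtain ⟨w, hw⟩ := exists_wval_eq (φ := φ) q.bypass q.bypass_isPath
  have hE : ∀ e ∈ q.bypass.edges, e ∈ H.edges := fun e he => by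
    have := q.bypass.edges_subset_edgeSet he
    rw [SimpleGraph.edgeSet_fromEdgeSet] at this
    exact_mod_cast this.1
  have hS : ∀ x ∈ q.bypass.support, x ∈ H.verts := fun x hx => by
    rw [SimpleGraph.Walk.mem_support_iff_exists_mem_edges] at hx
    rcases hx with rfl | ⟨e, he, hx⟩
    · exact hb
    · exact H.edge_mem _ (hE _ he) _ hx
  refine ⟨w, hw ▸ phiTree_le_part hm h0 H _ _ _ rfl (fun x hx => hS x (by simpa using hx))
    ⟨a, by simp⟩ (fun e he => hE e (by simpa using he)) (fun e he x hx => ?_)⟩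
  rw [List.mem_toFinset] at he ⊢
  exact q.bypass.mem_support_of_mem_edges he hx

/-- Attach the new leaf `u` to the vertex `v` of the tree `H`. -/
noncomputable def FinTree.addLeaf (H : FinTree L) (u v : L) (hu : u ∉ H.verts) (hv : v ∈ H.verts) :
    FinTree L where
  verts := insert u H.verts
  edges := insert s(u, v) H.edges
  nonempty := Finset.insert_nonempty _ _
  loopless := by
    intro e he
    rcases Finset.mem_insert.mp he with rfl | he
    · rw [Sym2.mk_isDiag_iff]; rintro rfl; exact hu hv
    · exact H.loopless e he
  edge_mem := by
    intro e he x hx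
    rcases Finset.mem_insert.mp he with rfl | he
    · rcases Sym2.mem_iff.mp hx with rfl | rfl
      · exact Finset.mem_insert_self _ _
      · exact Finset.mem_insert_of_mem hv
    · exact Finset.mem_insert_of_mem (H.edge_mem e he x hx)
  connected := by
    have key : ∀ x ∈ insert u H.verts,
        (SimpleGraph.fromEdgeSet ((insert s(u, v) H.edges : Finset _) : Set (Sym2 L))).Reachable
          x v := by
      intro x hx
      rcases Finset.mem_insert.mp hx with rfl | hx
      · refine SimpleGraph.Adj.reachable ?_
        rw [SimpleGraph.fromEdgeSet_adj]
        exact ⟨by simp, by rintro rfl; exact hu hv⟩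
      · exact (H.connected x hx v hv).mono (SimpleGraph.fromEdgeSet_mono (by simp))
    exact fun x hx y hy => (key x hx).trans (key y hy).symm
  acyclic := by
    have hn : ¬ (SimpleGraph.fromEdgeSet (H.edges : Set (Sym2 L))).Reachable u v := by
      rintro ⟨p⟩
      cases p with
      | nil => exact hu hv
      | cons h p =>
        rw [SimpleGraph.fromEdgeSet_adj] at h
        exact hu (H.edge_mem _ (by exact_mod_cast h.1) _ (by simp))
    refine (H.acyclic.sup_edge_of_not_reachable hn).anti ?_
    intro x y hxy
    rw [SimpleGraph.fromEdgeSet_adj] at hxy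
    obtain ⟨h1, h2⟩ := hxy
    rw [Finset.coe_insert, Set.mem_insert_iff] at h1
    rw [SimpleGraph.sup_adj, SimpleGraph.fromEdgeSet_adj, SimpleGraph.edge_adj]
    rcases h1 with h1 | h1
    · right; rw [Sym2.eq_iff] at h1; tauto
    · left; exact ⟨h1, h2⟩

/-- The one-vertex tree. -/
def FinTree.single (a : L) : FinTree L where
  verts := {a}
  edges := ∅
  nonempty := by simp
  loopless := by simp
  edge_mem := by simp
  connected := by simp
  acyclic := by simp [SimpleGraph.isAcyclic_bot]

lemma exists_pathTree {u v : L} (p : (⊤ : SimpleGraph L).Walk u v) (hp : p.IsPath) :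
    ∃ H : FinTree L, H.verts = p.support.toFinset ∧ IsPathTree H u v ∧
      phiTree φ H = wval φ p := by
  induction p with
  | @nil u =>
    exact ⟨.single u, by simp [FinTree.single], by simp [IsPathTree, FinTree.single],
      by simp [phiTree, wval, FinTree.single]⟩
  | @cons u x v h p ih =>
    rw [SimpleGraph.Walk.cons_isPath_iff] at hp
    obtain ⟨H, hV, ⟨hx, hv, hl⟩, hφ⟩ := ih hp.1
    have hu : u ∉ H.verts := by rw [hV]; simpa using hp.2
    have hue : s(u, x) ∉ H.edges := fun hc => hu (H.edge_mem _ hc _ (by simp))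
    refine ⟨H.addLeaf u x hu hx, by simp [FinTree.addLeaf, hV],
      ⟨Finset.mem_insert_self _ _, Finset.mem_insert_of_mem hv, ?_⟩, ?_⟩
    · intro y hy hc
      rcases Finset.mem_insert.mp hy with rfl | hy
      · exact Or.inl rfl
      refine Or.inr ?_
      have hsub : H.edges.filter (fun e => y ∈ e) ⊆
          (H.addLeaf u x hu hx).edges.filter (fun e => y ∈ e) :=
        Finset.filter_subset_filter _ (Finset.subset_insert _ _)
      rcases hl y hy ((Finset.card_le_card hsub).trans hc) with rfl | hyv
      · by_contra hyv
        -- The old end `y`, if different from `v`, keeps an edge of `H` and gains the new one.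
        obtain ⟨q⟩ := H.connected y hx v hv
        cases q with
        | nil => exact hyv rfl
        | @cons _ z _ hz q =>
          rw [SimpleGraph.fromEdgeSet_adj] at hz
          have hz1 : s(y, z) ∈ H.edges := by exact_mod_cast hz.1
          rw [Finset.card_le_one] at hc
          have := hc s(u, y) (by simp [FinTree.addLeaf]) s(y, z)
            (by simp [FinTree.addLeaf, hz1])
          exact hue (this ▸ hz1)
      · exact hyv
    · rw [wval, ← hφ]
      change ∑ a ∈ insert u H.verts, φ a - ∑ e ∈ insert s(u, x) H.edges, edgeVal φ e =
        φ u - φ (u ⊔ x) + (∑ a ∈ H.verts, φ a - ∑ e ∈ H.edges, edgeVal φ e)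
      rw [Finset.sum_insert hu, Finset.sum_insert hue]
      change _ - (φ (u ⊔ x) + _) = _
      ring

/-! ### The function `lam` -/

/-- With `lam_le`, this shows that `lam φ a b` is the supremum of `wval φ` over all walks. -/
lemma wval_le_lam (hm : Monotone φ) (h0 : ∀ x, 0 ≤ φ x) {a b : L}
    (w : (⊤ : SimpleGraph L).Walk a b) : wval φ w ≤ lam φ a b := by
  obtain ⟨H, -, hH, hφ⟩ := exists_pathTree (φ := φ) w.bypass w.bypass_isPath
  refine (wval_le_bypass hm w).trans (le_csSup ⟨φ a, ?_⟩ ⟨H, hH, hφ⟩)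
  rintro r ⟨H, hH, rfl⟩
  obtain ⟨w, hw⟩ := exists_walk_ge hm h0 H hH.1 hH.2.1
  exact hw.trans (wval_le_left hm w)

lemma lam_le (hm : Monotone φ) (h0 : ∀ x, 0 ≤ φ x) {a b : L} {c : ℝ}
    (h : ∀ w : (⊤ : SimpleGraph L).Walk a b, wval φ w ≤ c) : lam φ a b ≤ c := by
  refine csSup_le ?_ ?_
  · obtain ⟨w⟩ : (⊤ : SimpleGraph L).Reachable a b := by
      by_cases hab : a = b
      · subst hab; exact SimpleGraph.Reachable.refl _
      · exact SimpleGraph.Adj.reachable (by simpa using hab)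
    obtain ⟨H, -, hH, hφ⟩ := exists_pathTree (φ := φ) w.bypass w.bypass_isPath
    exact ⟨_, H, hH, hφ⟩
  · rintro r ⟨H, hH, rfl⟩
    obtain ⟨w, hw⟩ := exists_walk_ge hm h0 H hH.1 hH.2.1
    exact hw.trans (h w)

/-- Extending a walk from `a` to `x` by the step from `x` to `y`. Applied to comparable `x`, `y`, it
gives the monotonicity of both `lam φ a` and `φ - lam φ a`. -/
lemma lam_step (hm : Monotone φ) (h0 : ∀ x, 0 ≤ φ x) (a x y : L) :
    lam φ a x + φ y - φ (x ⊔ y) ≤ lam φ a y := by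
  by_cases hxy : x = y
  · subst hxy; simp
  suffices h : lam φ a x ≤ lam φ a y - φ y + φ (x ⊔ y) by linarith
  refine lam_le hm h0 fun w => ?_
  have h1 := wval_le_lam hm h0 (w.append (.cons (by simpa using hxy) SimpleGraph.Walk.nil))
  rw [wval_append] at h1
  simp only [wval] at h1
  linarith

lemma lam_mono (hm : Monotone φ) (h0 : ∀ x, 0 ≤ φ x) (a : L) : Monotone (lam φ a) := by
  intro x y hxy
  have := lam_step hm h0 a x y
  rw [sup_eq_right.mpr hxy] at this
  linarith

lemma sub_lam_mono (hm : Monotone φ) (h0 : ∀ x, 0 ≤ φ x) (a : L) :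
    Monotone (fun x => φ x - lam φ a x) := by
  intro x y hxy
  have := lam_step hm h0 a y x
  rw [sup_eq_left.mpr hxy] at this
  change _ - _ ≤ _ - _
  linarith

lemma lam_le_left (hm : Monotone φ) (h0 : ∀ x, 0 ≤ φ x) (a x : L) : lam φ a x ≤ φ a :=
  lam_le hm h0 fun w => wval_le_left hm w

lemma lam_le_right (hm : Monotone φ) (h0 : ∀ x, 0 ≤ φ x) (a x : L) : lam φ a x ≤ φ x :=
  lam_le hm h0 fun w => wval_le_right hm w

lemma lam_self (hm : Monotone φ) (h0 : ∀ x, 0 ≤ φ x) (a : L) : lam φ a a = φ a :=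
  le_antisymm (lam_le_left hm h0 a a) (wval_le_lam hm h0 (.nil : (⊤ : SimpleGraph L).Walk a a))

lemma lam_nonneg [BoundedOrder L] (hm : Monotone φ) (h0 : ∀ x, 0 ≤ φ x) (a x : L) :
    0 ≤ lam φ a x := by
  -- The path through `⊥` has value `φ ⊥`.
  have h1 := lam_step hm h0 a a ⊥
  rw [lam_self hm h0, sup_bot_eq] at h1
  have h2 := lam_mono hm h0 a (bot_le : ⊥ ≤ x)
  linarith [h0 ⊥]

end Walks

/-! ### Layer-cake bound -/

section Cake

variable {L : Type*} [Lattice L] [Fintype L] [BoundedOrder L]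

/-- A nonnegative monotone `g` with `g a = g ⊤` is a nonnegative combination of indicators of
up-sets containing `a`, of total weight `g ⊤`; peel them off one level at a time. -/
lemma layer_bound (α : L → ℝ) (a : L) (m : ℝ)
    (hm : ∀ V ∈ LFam L, a ∈ V → m ≤ ∑ x ∈ V, α x) (n : ℕ) :
    ∀ g : L → ℝ, (Finset.univ.filter (fun x => 0 < g x)).card ≤ n → Monotone g →
      (∀ x, 0 ≤ g x) → g a = g ⊤ → m * g ⊤ ≤ ∑ x, α x * g x := by
  induction n with
  | zero =>
    intro g hc hg h0 ha
    have hz : ∀ x, g x = 0 := fun x => by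
      by_contra hx
      have : x ∈ Finset.univ.filter (fun x => 0 < g x) := by
        simpa using lt_of_le_of_ne (h0 x) (Ne.symm hx)
      rw [Finset.card_eq_zero.mp (Nat.le_zero.mp hc)] at this
      simp at this
    simp [hz]
  | succ n ih =>
    intro g hc hg h0 ha
    by_cases ht : g ⊤ = 0
    · have hz : ∀ x, g x = 0 := fun x => le_antisymm (ht ▸ hg le_top) (h0 x)
      simp [hz]
    have htp : 0 < g ⊤ := lt_of_le_of_ne (h0 _) (Ne.symm ht)
    set V := Finset.univ.filter (fun x => 0 < g x) with hV
    have memV : ∀ x, x ∈ V ↔ 0 < g x := fun x => by simp [hV]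
    have hVne : V.Nonempty := ⟨⊤, (memV _).mpr htp⟩
    obtain ⟨b, hbV, hb⟩ := V.exists_min_image g hVne
    have hbp : 0 < g b := (memV b).mp hbV
    have hVL : V ∈ LFam L := by
      simp only [LFam, Finset.mem_filter, Finset.mem_univ, true_and]
      exact ⟨fun x y hx hxy => (memV y).mpr (((memV x).mp hx).trans_le (hg hxy)), hVne⟩
    have haV : a ∈ V := (memV a).mpr (ha ▸ htp)
    have htV : ⊤ ∈ V := (memV _).mpr htp
    let g' : L → ℝ := fun x => g x - if x ∈ V then g b else 0
    have hz : ∀ x, x ∉ V → g x = 0 := fun x hx =>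
      le_antisymm (not_lt.mp fun h => hx ((memV x).mpr h)) (h0 x)
    have h0' : ∀ x, 0 ≤ g' x := fun x => by
      by_cases hx : x ∈ V
      · simp only [g', hx, if_true]; linarith [hb x hx]
      · simp only [g', hx, if_false]; linarith [h0 x]
    have h1 := ih g' ?_ ?_ h0' ?_
    · have h2 : ∑ x, α x * g x = ∑ x, α x * g' x + g b * ∑ x ∈ V, α x := by
        have h5 : ∑ x ∈ V, g b * α x = ∑ x, if x ∈ V then g b * α x else 0 := by simp
        rw [Finset.mul_sum, h5, ← Finset.sum_add_distrib]
        refine Finset.sum_congr rfl fun x _ => ?_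
        by_cases hx : x ∈ V
        · simp only [g', hx, if_true]; ring
        · simp only [g', hx, if_false]; ring
      have h3 := mul_le_mul_of_nonneg_left (hm V hVL haV) hbp.le
      have h4 : g' ⊤ = g ⊤ - g b := by simp [g', htV]
      rw [h4] at h1
      linarith
    · refine Nat.le_of_lt_succ (lt_of_lt_of_le (Finset.card_lt_card ?_) hc)
      rw [Finset.ssubset_iff_of_subset]
      · exact ⟨b, hbV, by simp [g', hbV]⟩
      · intro x hx
        by_contra hxV
        simp [g', hxV, hz x hxV] at hx
    · intro x y hxy
      by_cases hx : x ∈ V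
      · have hy : y ∈ V := (memV y).mpr (((memV x).mp hx).trans_le (hg hxy))
        simp only [g', hx, hy, if_true]; linarith [hg hxy]
      · have : g' x = 0 := by simp [g', hx, hz x hx]
        rw [this]; exact h0' y
    · simp [g', haV, htV, ha]

/-! ### Möbius inversion -/

lemma exists_moebius {L : Type*} [Lattice L] [Fintype L] (ψ : L → ℝ) :
    ∃ p : L → ℝ, ∀ x, ψ x = ∑ y ∈ Finset.univ.filter (fun y => y ≤ x), p y := by
  let p : L → ℝ := WellFoundedLT.fix (motive := fun _ => ℝ) fun x ih =>
    ψ x - ∑ y : L, if h : y < x then ih y h else 0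
  refine ⟨p, fun x => ?_⟩
  have h1 : p x = ψ x - ∑ y : L, if y < x then p y else 0 := by
    simp only [p]
    rw [WellFoundedLT.fix_eq]
    simp
  have h2 : Finset.univ.filter (fun y => y ≤ x) =
      insert x (Finset.univ.filter (fun y => y < x)) := by
    ext y; simp [le_iff_eq_or_lt]
  rw [h2, Finset.sum_insert (by simp), h1, Finset.sum_filter]
  ring

lemma succDiff_eq {L : Type*} [Lattice L] [Fintype L] {ψ p : L → ℝ}
    (hp : ∀ x, ψ x = ∑ y ∈ Finset.univ.filter (fun y => y ≤ x), p y) (l : List L) :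
    ∀ x, succDiff ψ l x =
      ∑ y ∈ Finset.univ.filter (fun y => y ≤ x ∧ ∀ a ∈ l, ¬ y ≤ a), p y := by
  induction l using List.reverseRecOn with
  | nil => intro x; simpa [succDiff] using hp x
  | append_singleton l a ih =>
    intro x
    have : succDiff ψ (l ++ [a]) x = succDiff ψ l x - succDiff ψ l (x ⊓ a) := by
      simp [succDiff, List.foldl_append]
    rw [this, ih, ih, sub_eq_iff_eq_add, Finset.sum_filter, Finset.sum_filter, Finset.sum_filter,
      ← Finset.sum_add_distrib]
    refine Finset.sum_congr rfl fun y _ => ?_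
    by_cases h1 : y ≤ x <;> by_cases h2 : y ≤ a <;> by_cases h3 : ∀ b ∈ l, ¬ y ≤ b <;>
      simp [h1, h2, h3, or_imp, forall_and]

lemma moebius_nonneg {ψ p : L → ℝ} (hψ : Capacity ψ) (hcm : CMono ψ)
    (hp : ∀ x, ψ x = ∑ y ∈ Finset.univ.filter (fun y => y ≤ x), p y) (x : L) : 0 ≤ p x := by
  -- Subtracting the contributions of all elements strictly below `x` isolates `p x`.
  have h := succDiff_eq hp (Finset.univ.filter (fun a => a < x)).toList x
  have hs : Finset.univ.filter (fun y => y ≤ x ∧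
      ∀ a ∈ (Finset.univ.filter (fun a => a < x)).toList, ¬ y ≤ a) = {x} := by
    ext y
    simp only [Finset.mem_toList, Finset.mem_filter, Finset.mem_univ, true_and,
      Finset.mem_singleton]
    refine ⟨fun ⟨h1, h2⟩ => ?_, ?_⟩
    · by_contra hne
      exact h2 y (lt_of_le_of_ne h1 hne) le_rfl
    · rintro rfl
      exact ⟨le_rfl, fun a ha hc => (ha.trans_le hc).false⟩
  rw [hs, Finset.sum_singleton] at h
  rw [← h]
  by_cases hx : (Finset.univ.filter (fun a => a < x)).toList = []
  · rw [hx]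
    change 0 ≤ ψ x
    exact hψ.2.1 ▸ hψ.1 bot_le
  · exact hcm _ hx x

/-! ### Iterated λ-differences along a list -/

lemma lamSucc_append {L : Type*} [Lattice L] (φ : L → ℝ) (l : List L) (a : L) :
    lamSucc φ (l ++ [a]) = fun x => lamSucc φ l x - lam (lamSucc φ l) a x := by
  simp [lamSucc, List.foldl_append]

/-- The iterated λ-difference stays a nonnegative monotone function, and vanishes on the elements
already processed. -/
lemma lamSucc_props {L : Type*} [Lattice L] [BoundedOrder L] {φ : L → ℝ} (hφ : Capacity φ) (l : List L) :
    Monotone (lamSucc φ l) ∧ (∀ x, 0 ≤ lamSucc φ l x) ∧ ∀ a ∈ l, lamSucc φ l a = 0 := by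
  induction l using List.reverseRecOn with
  | nil => exact ⟨hφ.1, fun x => hφ.2.1 ▸ hφ.1 bot_le, by simp⟩
  | append_singleton l a ih =>
    obtain ⟨h1, h2, h3⟩ := ih
    rw [lamSucc_append]
    refine ⟨sub_lam_mono h1 h2 a, fun x => sub_nonneg.mpr (lam_le_right h1 h2 a x), ?_⟩
    intro b hb
    rcases List.mem_append.mp hb with hb | hb
    · have h4 := lam_le_right h1 h2 a b
      have h5 := lam_nonneg h1 h2 a b
      rw [h3 b hb] at h4
      simp only [h3 b hb]
      linarith
    · rw [List.mem_singleton.mp hb]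
      simp [lam_self h1 h2]

/-- Summation by parts along an initial segment `l` of a linear extension along which `m`
decreases. -/
lemma chain_bound {φ ψ p α m : L → ℝ} (hφ : Capacity φ) (hψ : Capacity ψ)
    (hp : ∀ x, ψ x = ∑ y ∈ Finset.univ.filter (fun y => y ≤ x), p y)
    (hm : ∀ a, ∀ V ∈ LFam L, a ∈ V → m a ≤ ∑ x ∈ V, α x)
    (hcomp : ∀ l : List L, l ≠ [] → l.Nodup →
      (∀ i j : Fin l.length, l.get i < l.get j → (i : ℕ) < j) →
      lamSucc φ l ⊤ ≤ succDiff ψ l ⊤) (l : List L) :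
    l.Pairwise (fun x y => ¬ y ≤ x ∧ m y ≤ m x) → (∀ a ∈ l, ∀ y ≤ a, y ∈ l) →
    ∀ c, (∀ y ∈ l, c ≤ m y) →
      (l.map fun y => p y * m y).sum ≤
        ∑ x, α x * (φ x - lamSucc φ l x) + c * (lamSucc φ l ⊤ - succDiff ψ l ⊤) := by
  induction l using List.reverseRecOn with
  | nil => intro _ _ c _; simp [lamSucc, succDiff, hφ.2.2, hψ.2.2]
  | append_singleton l a ih =>
    intro hpw hlow c hc
    have hd : lamSucc φ (l ++ [a]) ⊤ ≤ succDiff ψ (l ++ [a]) ⊤ := by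
      refine hcomp _ (by simp) (hpw.imp fun {x y} h => by rintro rfl; exact h.1 le_rfl) ?_
      intro i j hij
      by_contra hji
      rcases lt_or_eq_of_le (not_lt.mp hji) with h | h
      · exact (List.pairwise_iff_get.mp hpw j i h).1 hij.le
      · rw [Fin.ext h] at hij
        exact lt_irrefl _ hij
    rw [List.pairwise_append] at hpw
    obtain ⟨hpw1, -, hpw2⟩ := hpw
    have hla : ∀ b ∈ l, ¬ a ≤ b ∧ m a ≤ m b := fun b hb => hpw2 b hb a (by simp)
    have hlow' : ∀ b ∈ l, ∀ y ≤ b, y ∈ l := by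
      intro b hb y hy
      rcases List.mem_append.mp (hlow b (by simp [hb]) y hy) with h | h
      · exact h
      · rw [List.mem_singleton.mp h] at hy
        exact absurd hy (hla b hb).1
    -- The differences `lamSucc φ l ⊤ - succDiff ψ l ⊤` are nonpositive and `m` decreases along the
    -- list, so the constant may be lowered from `m a` to `c`.
    have h1 := ih hpw1 hlow' (m a) (fun y hy => (hla y hy).2)
    obtain ⟨hg1, hg2, -⟩ := lamSucc_props hφ l
    have hcake := layer_bound α a (m a) (hm a) _ (lam (lamSucc φ l) a) le_rfl
      (lam_mono hg1 hg2 a) (lam_nonneg hg1 hg2 a) (le_antisymm (lam_mono hg1 hg2 a le_top)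
        (lam_self hg1 hg2 a ▸ lam_le_left hg1 hg2 a ⊤))
    have hpa : succDiff ψ l ⊤ = succDiff ψ (l ++ [a]) ⊤ + p a := by
      rw [succDiff_eq hp, succDiff_eq hp, add_comm, ← Finset.sum_insert (by simp)]
      refine Finset.sum_congr ?_ fun _ _ => rfl
      ext y
      simp only [Finset.mem_filter, Finset.mem_univ, true_and, le_top, Finset.mem_insert,
        List.mem_append, List.mem_singleton]
      constructor
      · intro h
        by_cases hya : y = a
        · exact Or.inl hya
        right
        rintro b (hb | rfl) hyb
        · exact h b hb hyb
        · rcases List.mem_append.mp (hlow b (by simp) y hyb) with h' | h'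
          · exact h y h' le_rfl
          · exact hya (List.mem_singleton.mp h')
      · rintro (rfl | h) b hb
        · exact (hla b hb).1
        · exact h b (Or.inl hb)
    have hsum : ∑ x, α x * (φ x - lamSucc φ (l ++ [a]) x) =
        ∑ x, α x * (φ x - lamSucc φ l x) + ∑ x, α x * lam (lamSucc φ l) a x := by
      rw [lamSucc_append, ← Finset.sum_add_distrib]
      exact Finset.sum_congr rfl fun x _ => by ring
    have ht : lam (lamSucc φ l) a ⊤ = lamSucc φ l ⊤ - lamSucc φ (l ++ [a]) ⊤ := by
      rw [lamSucc_append]; ring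
    have hca : c ≤ m a := hc a (by simp)
    rw [List.map_append, List.sum_append, hsum]
    rw [ht] at hcake
    simp only [List.map_cons, List.map_nil, List.sum_cons, List.sum_nil, add_zero]
    have h5 := mul_le_mul_of_nonpos_right hca (sub_nonpos.mpr hd)
    rw [hpa] at h1
    linarith

/-- There is a linear extension of `L` along which the antitone function `m` decreases. -/
lemma exists_list {L : Type*} [Lattice L] {m : L → ℝ} (hm : Antitone m) (n : ℕ) :
    ∀ s : Finset L, s.card = n →
      ∃ l : List L, (∀ x, x ∈ l ↔ x ∈ s) ∧ l.Pairwise (fun x y => ¬ y ≤ x ∧ m y ≤ m x) := by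
  induction n with
  | zero =>
    intro s hs
    exact ⟨[], by simp [Finset.card_eq_zero.mp hs], by simp⟩
  | succ n ih =>
    intro s hs
    obtain ⟨b, hb, hbm⟩ := s.exists_min_image m (Finset.card_pos.mp (by omega))
    -- The last element `a` is maximal in `s` and above a minimizer of `m`, so also a minimizer.
    obtain ⟨a, hba, ha, hmax⟩ : ∃ a, b ≤ a ∧ a ∈ s ∧ ∀ y ∈ s, a ≤ y → y = a := by
      obtain ⟨a, hba, ha⟩ := s.exists_le_maximal hb
      exact ⟨a, hba, ha.1, fun y hy hay => (ha.eq_of_le hy hay).symm⟩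
    obtain ⟨l, hl1, hl2⟩ := ih (s.erase a) (by rw [Finset.card_erase_of_mem ha, hs]; rfl)
    refine ⟨l ++ [a], fun x => ?_, ?_⟩
    · by_cases hx : x = a <;> simp [hl1, hx, ha]
    · rw [List.pairwise_append]
      refine ⟨hl2, by simp, fun x hx y hy => ?_⟩
      rw [List.mem_singleton.mp hy]
      rw [hl1, Finset.mem_erase] at hx
      exact ⟨fun h => hx.1 (hmax x hx.2 h), (hm hba).trans (hbm x hx.2)⟩

/-- The dual inequality: `∑ α φ` dominates the expectation under `ψ` of
`m y = min {α(V) : y ∈ V}`. -/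
lemma dual_bound {φ ψ p α m : L → ℝ} (hφ : Capacity φ) (hψ : Capacity ψ)
    (hp : ∀ x, ψ x = ∑ y ∈ Finset.univ.filter (fun y => y ≤ x), p y)
    (hm : ∀ a, ∀ V ∈ LFam L, a ∈ V → m a ≤ ∑ x ∈ V, α x) (hanti : Antitone m)
    (hcomp : ∀ l : List L, l ≠ [] → l.Nodup →
      (∀ i j : Fin l.length, l.get i < l.get j → (i : ℕ) < j) →
      lamSucc φ l ⊤ ≤ succDiff ψ l ⊤) :
    ∑ y, p y * m y ≤ ∑ x, α x * φ x := by
  obtain ⟨l, hl1, hl2⟩ := exists_list hanti _ Finset.univ rfl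
  have hmem : ∀ x, x ∈ l := fun x => (hl1 x).mpr (Finset.mem_univ x)
  have h := chain_bound hφ hψ hp hm hcomp l hl2 (fun _ _ y _ => hmem y) (m ⊤)
    (fun y _ => hanti le_top)
  have hz : ∀ x, lamSucc φ l x = 0 := fun x => (lamSucc_props hφ l).2.2 x (hmem x)
  have hz' : succDiff ψ l ⊤ = 0 := by
    rw [succDiff_eq hp]
    refine Finset.sum_eq_zero fun y hy => ?_
    exact absurd le_rfl ((Finset.mem_filter.mp hy).2.2 y (hmem y))
  have hnd : l.Nodup := hl2.imp fun {x y} h => by rintro rfl; exact h.1 le_rfl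
  have hu : l.toFinset = Finset.univ := by ext x; simp [hmem]
  rw [← List.sum_toFinset _ hnd, hu] at h
  simpa [hz, hz'] using h

end Cake

/-! ### The coupling -/

/-- If `Λ_{a_1,…,a_k} φ(1̂) ≤ ∇_{a_1,…,a_k} ψ(1̂)` for every monotone path
`(a_1,…,a_k)` (distinct elements with `a_i < a_j → i < j`), then there is a joint pmf
`γ` on `𝓛 × L` with marginals `φ` and `ψ` and `ℙ(Y ∈ 𝒳) = 1`
(`γ(V,y) = 0` whenever `y ∉ V`). -/
theorem stmt_19 {L : Type*} [Lattice L] [Fintype L] [BoundedOrder L] [DecidableEq L]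
    (φ ψ : L → ℝ) (hφ : Capacity φ) (hψ : Capacity ψ) (hψcm : CMono ψ)
    (hcomp : ∀ l : List L, l ≠ [] → l.Nodup →
      (∀ i j : Fin l.length, l.get i < l.get j → (i : ℕ) < j) →
      lamSucc φ l ⊤ ≤ succDiff ψ l ⊤) :
    ∃ γ : Finset L → L → ℝ, (∀ V y, 0 ≤ γ V y) ∧
      (∑ V ∈ LFam L, ∑ y : L, γ V y) = 1 ∧
      (∀ x : L, (∑ V ∈ (LFam L).filter (fun V => x ∈ V), ∑ y : L, γ V y) = φ x) ∧
      (∀ y₀ : L,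
        (∑ V ∈ LFam L, ∑ y ∈ Finset.univ.filter (fun y => y ≤ y₀), γ V y) = ψ y₀) ∧
      (∀ V ∈ LFam L, ∀ y : L, y ∉ V → γ V y = 0) := by
  obtain ⟨p, hp⟩ := exists_moebius ψ
  have hp0 := moebius_nonneg hψ hψcm hp
  -- The function `x ↦ ℙ(x ∈ s Y)` for a deterministic selection `s y ∋ y` and `Y` with law `p`.
  let vec : {s : L → Finset L // ∀ y, s y ∈ LFam L ∧ y ∈ s y} → L → ℝ :=
    fun s x => ∑ y, p y * if x ∈ s.1 y then 1 else 0
  have hmem : φ ∈ convexHull ℝ (Set.range vec) := by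
    by_contra hnot
    obtain ⟨f, u, hfu, hf⟩ := geometric_hahn_banach_point_closed (convex_convexHull ℝ _)
      ((Set.finite_range vec).isClosed_convexHull ℝ) hnot
    let α : L → ℝ := fun x => f (Pi.single x 1)
    have hfα : ∀ z : L → ℝ, f z = ∑ x, α x * z x := fun z => by
      conv_lhs => rw [pi_eq_sum_univ' z]
      simp [α, map_sum, mul_comm]
    have hmin : ∀ y : L, ∃ V, (V ∈ LFam L ∧ y ∈ V) ∧
        ∀ W ∈ LFam L, y ∈ W → ∑ x ∈ V, α x ≤ ∑ x ∈ W, α x := by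
      intro y
      obtain ⟨V, hV, hVm⟩ := ((LFam L).filter (fun V => y ∈ V)).exists_min_image
        (fun V => ∑ x ∈ V, α x) ⟨Finset.univ, Finset.mem_filter.mpr
          ⟨Finset.mem_filter.mpr ⟨Finset.mem_univ _, fun _ _ _ _ => Finset.mem_univ _,
            ⟨⊤, Finset.mem_univ _⟩⟩, Finset.mem_univ _⟩⟩
      rw [Finset.mem_filter] at hV
      exact ⟨V, hV, fun W hW hy => hVm W (Finset.mem_filter.mpr ⟨hW, hy⟩)⟩
    -- The selection of minimizers makes the separating functional violate the dual inequality.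
    choose s hs hsm using hmin
    have h1 := dual_bound (m := fun y => ∑ x ∈ s y, α x) hφ hψ hp (fun a V hV ha => hsm a V hV ha)
      (by
        intro x y hxy
        have := (hs x).1
        simp only [LFam, Finset.mem_filter, Finset.mem_univ, true_and] at this
        exact hsm y (s x) (hs x).1 (this.1 (hs x).2 hxy)) hcomp
    have h2 := hf _ (subset_convexHull ℝ _ ⟨⟨s, hs⟩, rfl⟩)
    rw [hfα] at hfu h2
    have h3 : ∑ x, α x * vec ⟨s, hs⟩ x = ∑ y, p y * ∑ x ∈ s y, α x := by
      simp only [vec, Finset.mul_sum]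
      rw [Finset.sum_comm]
      refine Finset.sum_congr rfl fun y _ => ?_
      rw [← Finset.sum_filter_add_sum_filter_not Finset.univ (fun x => x ∈ s y)]
      rw [Finset.sum_eq_zero (s := Finset.univ.filter (fun x => x ∉ s y))
        (fun x hx => by simp [(Finset.mem_filter.mp hx).2]), add_zero]
      refine Finset.sum_congr (by ext; simp) fun x hx => ?_
      simp only [hx, if_true]; ring
    linarith
  rw [mem_convexHull_iff_exists_fintype] at hmem
  obtain ⟨ι, _, w, z, hw0, hw1, hz, hφz⟩ := hmem
  choose s hs using hz
  -- Pick the selection `s i` with probability `w i` and, independently, `Y` with law `p`.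
  have hsum : ∀ (T : Finset (Finset L)) (y : L),
      ∑ V ∈ T, ∑ i, w i * (if (s i).1 y = V then p y else 0) =
        ∑ i, w i * (if (s i).1 y ∈ T then p y else 0) := by
    intro T y
    rw [Finset.sum_comm]
    refine Finset.sum_congr rfl fun i _ => ?_
    rw [← Finset.mul_sum, Finset.sum_ite_eq]
  have hLF : ∀ y : L, ∑ V ∈ LFam L, ∑ i, w i * (if (s i).1 y = V then p y else 0) = p y := by
    intro y
    rw [hsum]
    simp only [((s _).2 y).1, if_true]
    rw [← Finset.sum_mul, hw1, one_mul]
  refine ⟨fun V y => ∑ i, w i * (if (s i).1 y = V then p y else 0), ?_, ?_, ?_, ?_, ?_⟩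
  · intro V y
    refine Finset.sum_nonneg fun i _ => mul_nonneg (hw0 i) ?_
    split_ifs
    · exact hp0 y
    · exact le_rfl
  · rw [Finset.sum_comm, Finset.sum_congr rfl fun y _ => hLF y, ← hψ.2.2, hp ⊤]
    simp
  · intro x
    rw [Finset.sum_comm, Finset.sum_congr rfl fun y _ => hsum _ y, Finset.sum_comm, ← hφz,
      Finset.sum_apply]
    refine Finset.sum_congr rfl fun i _ => ?_
    rw [← Finset.mul_sum, ← hs i]
    simp [vec, ((s i).2 _).1]
  · intro y₀
    rw [Finset.sum_comm, Finset.sum_congr rfl fun y _ => hLF y, ← hp]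
  · intro V _ y hy
    refine Finset.sum_eq_zero fun i _ => ?_
    have hne : (s i).1 y ≠ V := fun h => hy (h ▸ ((s i).2 y).2)
    rw [if_neg hne, mul_zero]
end
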